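/- arXiv:0906.4305 — 4 statements merged into one kernel-verified Lean document; each statement's English description precedes it below -/
import Mathlib

section
/- Let U ⊆ ℝ² be open and let X, Y : U → ℝ be differentiable. Define φ : U → ℂ² by φ(x,y) = (x + i·y, X(x,y) − i·Y(x,y)). Then at every point of U, the symplectic form vanishes on the pair of partial derivatives, ω(∂ₓφ, ∂ᵧφ) = 0, if and only if the Jacobian determinant of (X,Y) equals 1 at that point, i.e. Xₓ·Y_y − X_y·Yₓ = 1. (In other words, the diffeomorphism (X,Y) is incompressible if and only if the graph {(x+iy, X(x,y) − iY(x,y))} is a Lagrangian surface in ℂ².) -/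
/-- The symplectic form of ℂ²: ω(z,w) = −Im(z₁·conj w₁ + z₂·conj w₂). -/
noncomputable def sympForm (z w : ℂ × ℂ) : ℝ :=
  -((z.1 * (starRingEnd ℂ) w.1 + z.2 * (starRingEnd ℂ) w.2).im)

/-- An incompressibility criterion: for differentiable `X Y : U → ℝ` on an open `U ⊆ ℝ²`,
the graph map `φ(x,y) = (x + iy, X − iY)` has ω(∂ₓφ, ∂ᵧφ) = 0 at a point of `U` iff the
Jacobian determinant `Xₓ·Y_y − X_y·Yₓ` equals 1 there. -/
theorem stmt_0 (U : Set (ℝ × ℝ)) (hU : IsOpen U) (X Y : ℝ × ℝ → ℝ)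
    (hX : ∀ p ∈ U, DifferentiableAt ℝ X p) (hY : ∀ p ∈ U, DifferentiableAt ℝ Y p)
    (φ : ℝ × ℝ → ℂ × ℂ)
    (hφ : ∀ p : ℝ × ℝ,
      φ p = ((p.1 : ℂ) + Complex.I * (p.2 : ℂ), (X p : ℂ) - Complex.I * (Y p : ℂ))) :
    ∀ p ∈ U,
      (sympForm (fderiv ℝ φ p (1, 0)) (fderiv ℝ φ p (0, 1)) = 0 ↔
        fderiv ℝ X p (1, 0) * fderiv ℝ Y p (0, 1)
          - fderiv ℝ X p (0, 1) * fderiv ℝ Y p (1, 0) = 1) := by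
  intro p hp
  have h1 : HasFDerivAt (fun q : ℝ × ℝ => (q.1 : ℂ))
      (Complex.ofRealCLM.comp (ContinuousLinearMap.fst ℝ ℝ ℝ)) p :=
    (Complex.ofRealCLM.comp (ContinuousLinearMap.fst ℝ ℝ ℝ)).hasFDerivAt
  have h2 : HasFDerivAt (fun q : ℝ × ℝ => (q.2 : ℂ))
      (Complex.ofRealCLM.comp (ContinuousLinearMap.snd ℝ ℝ ℝ)) p :=
    (Complex.ofRealCLM.comp (ContinuousLinearMap.snd ℝ ℝ ℝ)).hasFDerivAt
  have h3 : HasFDerivAt (fun q : ℝ × ℝ => (X q : ℂ))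
      (Complex.ofRealCLM.comp (fderiv ℝ X p)) p :=
    Complex.ofRealCLM.hasFDerivAt.comp p (hX p hp).hasFDerivAt
  have h4 : HasFDerivAt (fun q : ℝ × ℝ => (Y q : ℂ))
      (Complex.ofRealCLM.comp (fderiv ℝ Y p)) p :=
    Complex.ofRealCLM.hasFDerivAt.comp p (hY p hp).hasFDerivAt
  have h := (h1.add (h2.const_mul Complex.I)).prodMk (h3.sub (h4.const_mul Complex.I))
  have hf : φ = fun q : ℝ × ℝ =>
      ((q.1 : ℂ) + Complex.I * (q.2 : ℂ), (X q : ℂ) - Complex.I * (Y q : ℂ)) := funext hφ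
  have h' := HasFDerivAt.fderiv (f := φ) (by rw [hf]; exact h)
  rw [h']
  simp [sympForm]
  constructor <;> intro h <;> linarith
end

section
/- Let κ₁, …, κₙ : ℝ → ℝ be differentiable functions. Then the identity Σⱼ κⱼ'(sⱼ) = 0 holds for all (s₁,…,sₙ) ∈ ℝⁿ if and only if there exist real numbers λ₁,…,λₙ and μ₁,…,μₙ with Σⱼ λⱼ = 0 such that κⱼ(s) = λⱼ·s + μⱼ for all s ∈ ℝ and every j. (This is the analytic content of the statement that a product of n unit-speed planar curves is Hamiltonian-minimal if and only if each curve has curvature an affine function of arclength, κⱼ(sⱼ) = λⱼsⱼ + μⱼ, i.e. each curve is a circle, a line, or a Cornu spiral of parameter λⱼ, with Σⱼ λⱼ = 0.) -/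
open scoped BigOperators

/-- Differentiable functions `κ₁,…,κₙ : ℝ → ℝ` satisfy `Σⱼ κⱼ'(sⱼ) = 0` for all
`(s₁,…,sₙ)` iff each `κⱼ` is affine, `κⱼ(s) = λⱼ·s + μⱼ`, with `Σⱼ λⱼ = 0`.
(Hamiltonian minimality of a product of unit-speed planar curves: each curve is a circle,
a line, or a Cornu spiral of parameter `λⱼ`, with `Σⱼ λⱼ = 0`.) -/
theorem stmt_4 (n : ℕ) (κ : Fin n → ℝ → ℝ) (hκ : ∀ j, Differentiable ℝ (κ j)) :
    (∀ s : Fin n → ℝ, ∑ j, deriv (κ j) (s j) = 0) ↔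
      ∃ lam mu : Fin n → ℝ, (∑ j, lam j = 0) ∧
        ∀ (j : Fin n) (s : ℝ), κ j s = lam j * s + mu j := by
  constructor
  · intro h
    refine ⟨fun j => deriv (κ j) 0, fun j => κ j 0, h (fun _ => 0), ?_⟩
    intro j s
    have hd : ∀ x, deriv (κ j) x = deriv (κ j) 0 := by
      intro x
      have h1 := h (Function.update (fun _ => 0) j x)
      have h0 := h (fun _ => 0)
      rw [← Finset.add_sum_erase _ _ (Finset.mem_univ j)] at h1 h0
      have h2 : ∑ i ∈ Finset.univ.erase j,
          deriv (κ i) (Function.update (fun _ => (0 : ℝ)) j x i) =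
          ∑ i ∈ Finset.univ.erase j, deriv (κ i) 0 := by
        refine Finset.sum_congr rfl fun i hi => ?_
        rw [Function.update_of_ne (Finset.ne_of_mem_erase hi)]
      rw [h2, Function.update_self] at h1
      linarith
    have hg : ∀ x, HasDerivAt (fun t => κ j t - deriv (κ j) 0 * t) 0 x := by
      intro x
      have h3 := ((hκ j x).hasDerivAt).sub ((hasDerivAt_id x).const_mul (deriv (κ j) 0))
      rw [hd x, mul_one, sub_self] at h3
      exact h3
    have hc := is_const_of_deriv_eq_zero (fun x => (hg x).differentiableAt)
      (fun x => (hg x).deriv) s 0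
    simp only [mul_zero, sub_zero] at hc
    linarith
  · rintro ⟨lam, mu, hs, h⟩ s
    rw [← hs]
    refine Finset.sum_congr rfl fun j _ => ?_
    have h1 : κ j = fun t => lam j * t + mu j := funext (h j)
    have h2 := ((hasDerivAt_id (s j)).const_mul (lam j)).add_const (mu j)
    rw [mul_one] at h2
    rw [h1]
    exact h2.deriv
end

section
/- For φ ∈ (0, π/2), let γ(s) = (cos φ · e^{i·tan φ·s}, sin φ · e^{−i·cot φ·s}). Then γ is a periodic map (there exists T > 0 with γ(s+T) = γ(s) for all s ∈ ℝ) if and only if (tan φ)² is a rational number. -/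
/-- The constant-curvature Legendrian curve
`γ(s) = (cos φ·e^{i tan φ·s}, sin φ·e^{−i cot φ·s})`, `φ ∈ (0, π/2)`, is periodic
iff `tan²φ` is rational. -/
theorem stmt_9 (φ : ℝ) (hφ : φ ∈ Set.Ioo 0 (Real.pi / 2))
    (γ : ℝ → ℂ × ℂ)
    (hγ : ∀ s : ℝ, γ s =
      ((Real.cos φ : ℂ) * Complex.exp (Complex.I * (Real.tan φ * s)),
       (Real.sin φ : ℂ) * Complex.exp (-Complex.I * (Real.cot φ * s)))) :
    (∃ T > 0, ∀ s : ℝ, γ (s + T) = γ s) ↔ ∃ q : ℚ, Real.tan φ ^ 2 = (q : ℝ) := by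
  obtain ⟨h0, h1⟩ := hφ
  have hs : 0 < Real.sin φ := Real.sin_pos_of_pos_of_lt_pi h0 (by linarith [Real.pi_pos])
  have hc : 0 < Real.cos φ := Real.cos_pos_of_mem_Ioo ⟨by linarith, h1⟩
  have htc : Real.tan φ * Real.cot φ = 1 := by
    rw [Real.tan_eq_sin_div_cos, Real.cot_eq_cos_div_sin]; field_simp
  have ht : 0 < Real.tan φ := Real.tan_pos_of_pos_of_lt_pi_div_two h0 h1
  have hk : 0 < Real.cot φ := by
    rw [Real.cot_eq_cos_div_sin]; positivity
  have hsC : (Real.sin φ : ℂ) ≠ 0 := by exact_mod_cast hs.ne'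
  have hcC : (Real.cos φ : ℂ) ≠ 0 := by exact_mod_cast hc.ne'
  generalize Real.tan φ = t at *
  generalize Real.cot φ = k at *
  have hpi := Real.pi_pos
  constructor
  · rintro ⟨T, hT, h⟩
    have h := h 0
    rw [hγ, hγ, Prod.mk.injEq] at h
    obtain ⟨ha, hb⟩ := h
    have ha := mul_left_cancel₀ hcC ha
    have hb := mul_left_cancel₀ hsC hb
    simp only [zero_add, Complex.ofReal_zero, mul_zero, Complex.exp_zero] at ha hb
    rw [Complex.exp_eq_one_iff] at ha hb
    obtain ⟨n, hn⟩ := ha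
    obtain ⟨m, hm⟩ := hb
    have hn' := congrArg Complex.im hn
    have hm' := congrArg Complex.im hm
    simp at hn' hm'
    have hm0 : (m : ℝ) ≠ 0 := by
      intro h
      rw [h] at hm'
      nlinarith [mul_pos hk hT]
    refine ⟨-(n : ℚ) / m, ?_⟩
    push_cast
    rw [eq_div_iff hm0]
    have e : t * (2 * Real.pi) * (t * m + n * k) = 0 := by
      linear_combination (-t^2) * hm' - t * k * hn'
    have e2 : t * m + n * k = 0 := by
      rcases mul_eq_zero.1 e with h | h
      · exact absurd h (by positivity)
      · exact h
    linear_combination t * e2 - n * htc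
  · rintro ⟨q, hq⟩
    have hq0 : 0 < q := by
      have : (0:ℝ) < q := by rw [← hq]; positivity
      exact_mod_cast this
    have hn : (0:ℝ) < q.num := by exact_mod_cast Rat.num_pos.2 hq0
    have hd : (0:ℝ) < q.den := by exact_mod_cast q.pos
    have hqq : t ^ 2 * q.den = q.num := by
      rw [hq]; exact_mod_cast Rat.mul_den_eq_num q
    have e1 : t * (2 * Real.pi * q.num * k) = q.num * (2 * Real.pi) := by
      linear_combination (2 * Real.pi * q.num) * htc
    have e2 : k * (2 * Real.pi * q.num * k) = q.den * (2 * Real.pi) := by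
      linear_combination (-2 * Real.pi * k ^ 2) * hqq + 2 * Real.pi * q.den * (t * k + 1) * htc
    refine ⟨2 * Real.pi * q.num * k, by positivity, fun s => ?_⟩
    have e1C := congrArg (fun x : ℝ => (x : ℂ)) e1
    have e2C := congrArg (fun x : ℝ => (x : ℂ)) e2
    push_cast at e1C e2C
    rw [hγ, hγ, Prod.mk.injEq]
    constructor
    · congr 1
      rw [Complex.exp_eq_exp_iff_exists_int]
      refine ⟨q.num, ?_⟩
      push_cast
      linear_combination Complex.I * e1C
    · congr 1
      rw [Complex.exp_eq_exp_iff_exists_int]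
      refine ⟨-q.den, ?_⟩
      push_cast
      linear_combination -Complex.I * e2C
end

section
/- Define φ : ℝ² → ℂ² by φ(s,t) = (cos s · e^{it}, sin s · e^{it}). Then for all (s,t) the Hermitian product of the partial derivatives satisfies (∂ₛφ, ∂ₜφ) = 0 and (∂ₛφ, ∂ₛφ) = (∂ₜφ, ∂ₜφ) = 1. Hence φ is a Lagrangian immersion of the plane into ℂ² whose induced metric is the flat Euclidean metric ds² + dt². (This is the surface, unique up to scaling, appearing in case (iii) of the classification of the Lagrangian immersions (φ₁ψ₁, φ₂ψ₂) with parallel mean curvature vector.) -/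
/-- The Hermitian product on ℂ²: (z,w) = z₁·conj w₁ + z₂·conj w₂. -/
noncomputable def herm2 (z w : ℂ × ℂ) : ℂ :=
  z.1 * (starRingEnd ℂ) w.1 + z.2 * (starRingEnd ℂ) w.2

/-- The map `φ(s,t) = (cos s·e^{it}, sin s·e^{it})` satisfies `(∂ₛφ,∂ₜφ) = 0` and
`(∂ₛφ,∂ₛφ) = (∂ₜφ,∂ₜφ) = 1`: it is a Lagrangian immersion of the plane into ℂ² inducing
the flat Euclidean metric `ds² + dt²`. -/
theorem stmt_19 (φ : ℝ × ℝ → ℂ × ℂ)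
    (hφ : ∀ p : ℝ × ℝ, φ p =
      ((Real.cos p.1 : ℂ) * Complex.exp (Complex.I * p.2),
       (Real.sin p.1 : ℂ) * Complex.exp (Complex.I * p.2))) :
    ∀ p : ℝ × ℝ,
      herm2 (fderiv ℝ φ p (1, 0)) (fderiv ℝ φ p (0, 1)) = 0 ∧
      herm2 (fderiv ℝ φ p (1, 0)) (fderiv ℝ φ p (1, 0)) = 1 ∧
      herm2 (fderiv ℝ φ p (0, 1)) (fderiv ℝ φ p (0, 1)) = 1 := by
  rintro ⟨s, t⟩
  have hφ' : φ = fun p : ℝ × ℝ =>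
      ((Real.cos p.1 : ℂ) * Complex.exp (Complex.I * p.2),
       (Real.sin p.1 : ℂ) * Complex.exp (Complex.I * p.2)) := funext hφ
  have hof : ∀ x : ℝ, HasDerivAt (fun x : ℝ => (x : ℂ)) 1 x := fun x =>
    Complex.ofRealCLM.hasDerivAt
  have hre : Differentiable ℝ (fun x : ℝ => (x : ℂ)) := fun x => (hof x).differentiableAt
  have hd : DifferentiableAt ℝ φ (s, t) := by
    rw [hφ']
    have h1 : Differentiable ℝ (fun p : ℝ × ℝ => ((Real.cos p.1 : ℝ) : ℂ)) :=
      hre.comp (Real.differentiable_cos.comp differentiable_fst)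
    have h2 : Differentiable ℝ (fun p : ℝ × ℝ => ((Real.sin p.1 : ℝ) : ℂ)) :=
      hre.comp (Real.differentiable_sin.comp differentiable_fst)
    have h3 : Differentiable ℝ (fun p : ℝ × ℝ => (p.2 : ℂ)) :=
      hre.comp differentiable_snd
    have h4 : Differentiable ℝ (fun p : ℝ × ℝ => Complex.exp (Complex.I * p.2)) :=
      (h3.const_mul Complex.I).cexp
    exact ((h1.mul h4).prodMk (h2.mul h4)) (s, t)
  have hs : fderiv ℝ φ (s, t) (1, 0) =
      ((-Real.sin s : ℝ) * Complex.exp (Complex.I * t),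
       (Real.cos s : ℂ) * Complex.exp (Complex.I * t)) := by
    have hc : HasDerivAt (fun x : ℝ => (x, t)) ((1 : ℝ), (0 : ℝ)) s :=
      (hasDerivAt_id s).prodMk (hasDerivAt_const s t)
    have h1 := hd.hasFDerivAt.comp_hasDerivAt s hc
    have h2 : HasDerivAt (φ ∘ fun x : ℝ => (x, t))
      (((-Real.sin s : ℝ) : ℂ) * Complex.exp (Complex.I * t),
       (Real.cos s : ℂ) * Complex.exp (Complex.I * t)) s := by
      rw [hφ']
      exact ((Real.hasDerivAt_cos s).ofReal_comp.mul_const (Complex.exp (Complex.I * t))).prodMk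
        ((Real.hasDerivAt_sin s).ofReal_comp.mul_const (Complex.exp (Complex.I * t)))
    exact h1.unique h2
  have ht : fderiv ℝ φ (s, t) (0, 1) =
      ((Real.cos s : ℂ) * (Complex.exp (Complex.I * t) * (Complex.I * 1)),
       (Real.sin s : ℂ) * (Complex.exp (Complex.I * t) * (Complex.I * 1))) := by
    have hc : HasDerivAt (fun x : ℝ => (s, x)) ((0 : ℝ), (1 : ℝ)) t :=
      (hasDerivAt_const t s).prodMk (hasDerivAt_id t)
    have h1 := hd.hasFDerivAt.comp_hasDerivAt t hc
    have h2 : HasDerivAt (φ ∘ fun x : ℝ => (s, x))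
      ((Real.cos s : ℂ) * (Complex.exp (Complex.I * t) * (Complex.I * 1)),
       (Real.sin s : ℂ) * (Complex.exp (Complex.I * t) * (Complex.I * 1))) t := by
      rw [hφ']
      have he := ((hof t).const_mul Complex.I).cexp
      exact (he.const_mul (Real.cos s : ℂ)).prodMk (he.const_mul (Real.sin s : ℂ))
    exact h1.unique h2
  have hE : Complex.exp (Complex.I * t) * (starRingEnd ℂ) (Complex.exp (Complex.I * t)) = 1 := by
    rw [← Complex.exp_conj, ← Complex.exp_add]
    simp
  have hcs : (Real.sin s : ℂ) ^ 2 + (Real.cos s : ℂ) ^ 2 = 1 := by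
    exact_mod_cast Real.sin_sq_add_cos_sq s
  rw [hs, ht]
  simp only [herm2, map_mul, Complex.conj_ofReal, Complex.conj_I, map_one, Complex.ofReal_neg,
    map_neg]
  generalize (starRingEnd ℂ) (Complex.exp (Complex.I * t)) = F at *
  generalize Complex.exp (Complex.I * t) = E at *
  have hI := Complex.I_sq
  refine ⟨by ring, ?_, ?_⟩
  · linear_combination ((Real.sin s : ℂ) ^ 2 + (Real.cos s : ℂ) ^ 2) * hE + hcs
  · linear_combination ((Real.sin s : ℂ) ^ 2 + (Real.cos s : ℂ) ^ 2) * hE + hcs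
      - ((Real.sin s : ℂ) ^ 2 + (Real.cos s : ℂ) ^ 2) * E * F * hI
end
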